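/- Let N ≥ 3, α ∈ (0, N), p > (N+α)/(N−2), and let {u_n} ⊂ D^{1,2}(G) be a maximizing sequence: ‖u_n‖_{D^{1,2}} = 1 and ∑_{x∈G} (R_α ∗ |u_n|^p)(x)|u_n(x)|^p → K as n → ∞. Then liminf_{n→∞} sup_{x∈G} ∑_{y∼x} |u_n(y)−u_n(x)| > 0. -/

import Mathlib

open Filter Topology

noncomputable section

namespace Choquard

variable {G : Type*}

/-- The word metric on the Cayley graph of `(G, S)`: the least `k` such that
`y = x * s₁ * ⋯ * s_k` with each `sᵢ ∈ S`. -/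
def wordDist [Group G] (S : Finset G) (x y : G) : ℕ :=
  sInf {k : ℕ | ∃ l : List G, (∀ s ∈ l, s ∈ S) ∧ l.length = k ∧ y = x * l.prod}

/-- Convolution against a kernel: `(R ∗ f)(x) = ∑_{y ∈ G} R(x,y) f(y)`. -/
def conv (R : G → G → ℝ) (f : G → ℝ) (x : G) : ℝ := ∑' y, R x y * f y

/-- The `ℓ^q(G)` norm of `u`. -/
def lpNorm (q : ℝ) (u : G → ℝ) : ℝ := (∑' x, |u x| ^ q) ^ (1 / q)

/-- `u ∈ ℓ^q(G)`. -/
def Memlp (q : ℝ) (u : G → ℝ) : Prop := Summable fun x : G => |u x| ^ q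

/-- `|∇u(x)|_p^p = ∑_{y ∼ x} |u(y) − u(x)|^p`, where `y ∼ x` iff `y = x * s`, `s ∈ S`. -/
def gradP [Group G] (S : Finset G) (p : ℝ) (u : G → ℝ) (x : G) : ℝ :=
  ∑ s ∈ S, |u (x * s) - u x| ^ p

/-- The `D^{1,p}` norm `(∑_x ∑_{y ∼ x} |u(y) − u(x)|^p)^{1/p}`. -/
def D1Norm [Group G] (S : Finset G) (p : ℝ) (u : G → ℝ) : ℝ :=
  (∑' x, gradP S p u x) ^ (1 / p)

/-- `u ∈ D^{1,p}(G) = {u ∈ ℓ^{Np/(N−p)}(G) : ‖u‖_{D^{1,p}} < ∞}`. -/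
def MemD1p [Group G] (S : Finset G) (N : ℕ) (p : ℝ) (u : G → ℝ) : Prop :=
  Memlp ((N : ℝ) * p / ((N : ℝ) - p)) u ∧ Summable (gradP S p u)

/-- `|∇u(x)|₂² = ∑_{y ∼ x} (u(y) − u(x))²`. -/
def gradSq [Group G] (S : Finset G) (u : G → ℝ) (x : G) : ℝ :=
  ∑ s ∈ S, (u (x * s) - u x) ^ 2

/-- The `D^{1,2}` norm. -/
def D12Norm [Group G] (S : Finset G) (u : G → ℝ) : ℝ :=
  (∑' x, gradSq S u x) ^ ((1 : ℝ) / 2)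

/-- `u ∈ D^{1,2}(G) = {u ∈ ℓ^{2N/(N−2)}(G) : ‖u‖_{D^{1,2}} < ∞}`. -/
def MemD12 [Group G] (S : Finset G) (N : ℕ) (u : G → ℝ) : Prop :=
  Memlp (2 * (N : ℝ) / ((N : ℝ) - 2)) u ∧ Summable (gradSq S u)

/-- The graph Laplacian `Δu(x) = ∑_{y ∼ x} (u(y) − u(x))`. -/
def lap [Group G] (S : Finset G) (u : G → ℝ) (x : G) : ℝ :=
  ∑ s ∈ S, (u (x * s) - u x)

/-- `u ∈ D^{2,2}(G) = {u ∈ ℓ^{2N/(N−4)}(G) : ‖Δu‖_{ℓ²} < ∞}`. -/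
def MemD22 [Group G] (S : Finset G) (N : ℕ) (u : G → ℝ) : Prop :=
  Memlp (2 * (N : ℝ) / ((N : ℝ) - 4)) u ∧ Summable fun x => (lap S u x) ^ 2

/-- `u ∈ D^{2,p}(G) = {u ∈ ℓ^{Np/(N−2p)}(G) : ‖Δu‖_{ℓ^p} < ∞}`. -/
def MemD2p [Group G] (S : Finset G) (N : ℕ) (p : ℝ) (u : G → ℝ) : Prop :=
  Memlp ((N : ℝ) * p / ((N : ℝ) - 2 * p)) u ∧ Summable fun x => |lap S u x| ^ p

/-- The nonlocal energy `∑_{x ∈ G} (R_α ∗ |u|^p)(x) |u(x)|^p`. -/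
def energy (R : G → G → ℝ) (p : ℝ) (u : G → ℝ) : ℝ :=
  ∑' x, conv R (fun y => |u y| ^ p) x * |u x| ^ p

/-- The optimal constant `K` of the Sobolev-type inequality. -/
def bestK [Group G] (S : Finset G) (N : ℕ) (R : G → G → ℝ) (p : ℝ) : ℝ :=
  sSup {t : ℝ | ∃ u : G → ℝ, MemD12 S N u ∧ D12Norm S u = 1 ∧ t = energy R p u}

/-- The discrete `p`-Laplacian. -/
def pLap [Group G] (S : Finset G) (p : ℝ) (u : G → ℝ) (x : G) : ℝ :=
  ∑ s ∈ S, |u (x * s) - u x| ^ (p - 2) * (u (x * s) - u x)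

/-- The cutoff `Ψ_r`, the indicator of `{x : d(x,e) ≥ r + 1}`. -/
def cutoff [Group G] (S : Finset G) (r : ℕ) (x : G) : ℝ :=
  if r + 1 ≤ wordDist S 1 x then 1 else 0

/-! Averaging `u` over a ball of radius `n` costs at most `n ‖u‖_{D^{1,2}}` in `ℓ²` and leaves a
function of size `O(n^{-N/q} ‖u‖_q)`. Comparing `u` with its averages at dyadic scales, one scale
for each level set, gives the Sobolev inequality `‖u‖_q ≤ C ‖u‖_{D^{1,2}}` for every `q` above the
critical exponent `2N/(N-2)`. For `t < 1` with `N + α < 2Nt` the function `d^{(α-N)/(2(1-t))}` is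
summable, so a Young inequality bounds the energy by `∑ |u|^{p/t} (∑ |u|^{p/t} + κ)`; choosing
moreover `q < p/t`, which is where `p > (N+α)/(N-2)` enters, the energy on the unit sphere of
`D^{1,2}` is at most a constant times a positive power of `sup |u|`. If all differences of a unit
vector `u` along edges are tiny, then `u` is uniformly close to its average over a large ball,
hence `sup |u|`, and with it the energy, is small. This is impossible near the supremum `K > 0`. -/

section Sums

variable {X : Type*}

lemma sum_le_tsum_of_forall_exists_le {ι : Type*} {g : X → ℝ} {w : ι → X → ℝ} {W : ι → ℝ}
    (hw : ∀ i x, 0 ≤ w i x) (hg : ∀ x, ∃ i, g x ≤ w i x)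
    (hwW : ∀ i (F : Finset X), ∑ x ∈ F, w i x ≤ W i) (hW : Summable W) (F : Finset X) :
    ∑ x ∈ F, g x ≤ ∑' i, W i := by
  classical
  choose i hi using hg
  calc ∑ x ∈ F, g x ≤ ∑ x ∈ F, ∑ j ∈ F.image i, w j x :=
        Finset.sum_le_sum fun x hx => (hi x).trans <|
          Finset.single_le_sum (f := fun j => w j x) (fun j _ => hw j x)
            (Finset.mem_image_of_mem i hx)
    _ = ∑ j ∈ F.image i, ∑ x ∈ F, w j x := Finset.sum_comm
    _ ≤ ∑ j ∈ F.image i, W j := Finset.sum_le_sum fun j _ => hwW j F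
    _ ≤ ∑' j, W j := hW.sum_le_tsum _ fun j _ => by simpa using hwW j ∅

lemma sum_comp_le_tsum {Y : Type*} {f : X → ℝ} (hf₀ : ∀ x, 0 ≤ f x) (hf : Summable f)
    (e : Y ↪ X) (F : Finset Y) : ∑ y ∈ F, f (e y) ≤ ∑' x, f x := by
  rw [← Finset.sum_map F e f]
  exact hf.sum_le_tsum _ fun x _ => hf₀ x

lemma hasSum_mul_of_nonneg {H k : X → ℝ} (hH₀ : ∀ x, 0 ≤ H x) (hk₀ : ∀ x, 0 ≤ k x)
    (hH : Summable H) (hk : Summable k) :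
    HasSum (fun z : X × X => H z.1 * k z.2) ((∑' x, H x) * ∑' x, k x) :=
  hH.hasSum.mul hk.hasSum (hH.mul_of_nonneg hk hH₀ hk₀)

lemma natCast_rpow_neg_le_two_rpow_neg_pow_log {n : ℕ} {t : ℝ} (hn : 1 ≤ n) (ht : 0 ≤ t) :
    (n : ℝ) ^ (-t) ≤ ((2 : ℝ) ^ (-t)) ^ Nat.log 2 n := by
  have hle : 2 ^ Nat.log 2 n ≤ n := Nat.pow_log_le_self 2 (Nat.one_le_iff_ne_zero.mp hn)
  rw [Real.rpow_pow_comm two_pos.le]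
  exact Real.rpow_le_rpow_of_nonpos (by positivity) (by exact_mod_cast hle) (neg_nonpos.mpr ht)

lemma summable_max_one_rpow_neg_of_card_le {ℓ : X → ℕ} {N : ℕ} {C t : ℝ}
    (hfin : ∀ n, {x | ℓ x ≤ n}.Finite)
    (hcard : ∀ n : ℕ, 1 ≤ n → (Nat.card {x | ℓ x ≤ n} : ℝ) ≤ C * (n : ℝ) ^ N) (ht : N < t) :
    Summable fun x => (max 1 (ℓ x) : ℝ) ^ (-t) := by
  let r : ℝ := 2 ^ (N : ℝ) * 2 ^ (-t)
  have hr : r < 1 := by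
    dsimp only [r]
    rw [← Real.rpow_add two_pos]
    exact Real.rpow_lt_one_of_one_lt_of_neg one_lt_two (by linarith)
  let w : ℕ → X → ℝ := fun j x => if ℓ x ≤ 2 ^ (j + 1) then ((2 : ℝ) ^ (-t)) ^ j else 0
  have hw : ∀ j x, 0 ≤ w j x := fun j x => by dsimp only [w]; split_ifs <;> positivity
  have hcover : ∀ x, ∃ j, (max 1 (ℓ x) : ℝ) ^ (-t) ≤ w j x := by
    intro x
    have hlt : max 1 (ℓ x) < 2 ^ (Nat.log 2 (max 1 (ℓ x)) + 1) :=
      Nat.lt_pow_succ_log_self one_lt_two _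
    refine ⟨Nat.log 2 (max 1 (ℓ x)),
      le_of_le_of_eq ?_ (if_pos ((le_max_right _ _).trans hlt.le)).symm⟩
    exact_mod_cast natCast_rpow_neg_le_two_rpow_neg_pow_log (le_max_left 1 (ℓ x))
      (N.cast_nonneg.trans ht.le)
  have hsum : ∀ j (F : Finset X), ∑ x ∈ F, w j x ≤ C * 2 ^ N * r ^ j := by
    intro j F
    have hF : ((F.filter fun x => ℓ x ≤ 2 ^ (j + 1)).card : ℝ) ≤
        C * ((2 ^ (j + 1) : ℕ) : ℝ) ^ N := by
      refine le_trans ?_ (hcard _ Nat.one_le_two_pow)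
      rw [Nat.card_eq_card_finite_toFinset (hfin _)]
      exact_mod_cast Finset.card_le_card fun x hx => by
        simpa using (Finset.mem_filter.mp hx).2
    calc ∑ x ∈ F, w j x
        = (F.filter fun x => ℓ x ≤ 2 ^ (j + 1)).card * ((2 : ℝ) ^ (-t)) ^ j := by
          rw [← Finset.sum_filter, Finset.sum_const, nsmul_eq_mul]
      _ ≤ C * ((2 ^ (j + 1) : ℕ) : ℝ) ^ N * ((2 : ℝ) ^ (-t)) ^ j := by gcongr
      _ = C * 2 ^ N * r ^ j := by simp only [r, mul_pow, Real.rpow_natCast]; push_cast; ring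
  have hW : Summable fun j => C * 2 ^ N * r ^ j :=
    (summable_geometric_of_lt_one (by positivity) hr).mul_left _
  exact summable_of_sum_le (fun x => by positivity)
    (sum_le_tsum_of_forall_exists_le hw hcover hsum hW)

lemma abs_rpow_le_of_two_mul_abs_le {a b L q : ℝ} (hq : 2 ≤ q) (hba : 2 * |b| ≤ |a|)
    (haL : |a| ≤ L) : |a| ^ q ≤ 4 * L ^ (q - 2) * (a - b) ^ 2 := by
  have hL : 0 ≤ L := (abs_nonneg a).trans haL
  have : 0 ≤ q - 2 := sub_nonneg.mpr hq
  have hab : |a| ≤ 2 * |a - b| := by linarith [abs_sub_abs_le_abs_sub a b]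
  calc |a| ^ q = |a| ^ (q - 2) * |a| ^ 2 := by
        rw [← Real.rpow_natCast, ← Real.rpow_add_of_nonneg (abs_nonneg a) (by linarith) (by simp)]
        norm_num
    _ ≤ L ^ (q - 2) * (2 * |a - b|) ^ 2 := by gcongr
    _ = 4 * L ^ (q - 2) * (a - b) ^ 2 := by rw [mul_pow, sq_abs]; ring

-- On the level set `M ρ ^ (j + 1) < |u| ≤ M ρ ^ j` the approximation `v j` is at most half of `u`,
-- so there `u - v j` controls `u`.
lemma tsum_abs_rpow_le_of_approx {u : X → ℝ} {v : ℕ → X → ℝ} {q M ρ κ D : ℝ} (hq : 2 ≤ q)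
    (hM : 0 < M) (hρ₀ : 0 < ρ) (hρ₁ : ρ < 1) (hκ : 0 ≤ κ) (hκρ : κ * ρ ^ (q - 2) < 1)
    (huM : ∀ x, |u x| ≤ M) (hv : ∀ j x, 2 * |v j x| ≤ M * ρ ^ (j + 1))
    (huv : ∀ j (F : Finset X), ∑ x ∈ F, (u x - v j x) ^ 2 ≤ κ ^ j * D) :
    ∑' x, |u x| ^ q ≤ 4 * M ^ (q - 2) * D / (1 - κ * ρ ^ (q - 2)) := by
  have hr₀ : 0 ≤ κ * ρ ^ (q - 2) := by positivity
  have hcover : ∀ x, ∃ j, |u x| ^ q ≤ 4 * (M * ρ ^ j) ^ (q - 2) * (u x - v j x) ^ 2 := by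
    intro x
    by_cases hx : u x = 0
    · refine ⟨0, ?_⟩
      rw [hx, abs_zero, Real.zero_rpow (by linarith)]
      positivity
    obtain ⟨j, hlt, hle⟩ := exists_nat_pow_near_of_lt_one (x := |u x| / M) (by positivity)
      ((div_le_one hM).mpr (huM x)) hρ₀ hρ₁
    rw [lt_div_iff₀' hM] at hlt
    rw [div_le_iff₀' hM] at hle
    exact ⟨j, abs_rpow_le_of_two_mul_abs_le hq ((hv j x).trans hlt.le) hle⟩
  have hsum : ∀ j (F : Finset X), ∑ x ∈ F, 4 * (M * ρ ^ j) ^ (q - 2) * (u x - v j x) ^ 2 ≤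
      4 * M ^ (q - 2) * D * (κ * ρ ^ (q - 2)) ^ j := by
    intro j F
    rw [← Finset.mul_sum, Real.mul_rpow hM.le (by positivity), ← Real.rpow_pow_comm hρ₀.le]
    calc 4 * (M ^ (q - 2) * (ρ ^ (q - 2)) ^ j) * ∑ x ∈ F, (u x - v j x) ^ 2
        ≤ 4 * (M ^ (q - 2) * (ρ ^ (q - 2)) ^ j) * (κ ^ j * D) := by gcongr; exact huv j F
      _ = 4 * M ^ (q - 2) * D * (κ * ρ ^ (q - 2)) ^ j := by rw [mul_pow]; ring
  refine Real.tsum_le_of_sum_le (fun x => by positivity) fun F => ?_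
  refine (sum_le_tsum_of_forall_exists_le (fun j x => by positivity) hcover hsum
    ((summable_geometric_of_lt_one hr₀ hκρ).mul_left _) F).trans_eq ?_
  rw [tsum_mul_left, tsum_geometric_of_lt_one hr₀ hκρ, div_eq_mul_inv]

end Sums

section LpNorm

variable {q : ℝ} {u : G → ℝ}

lemma lpNorm_nonneg : 0 ≤ lpNorm q u := by unfold lpNorm; positivity

lemma lpNorm_rpow (hq : q ≠ 0) : lpNorm q u ^ q = ∑' x, |u x| ^ q := by
  rw [lpNorm, ← Real.rpow_mul (by positivity), one_div_mul_cancel hq, Real.rpow_one]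

lemma Memlp.abs_le_lpNorm (hu : Memlp q u) (hq : 0 < q) (x : G) : |u x| ≤ lpNorm q u := by
  rw [← Real.rpow_le_rpow_iff (abs_nonneg _) lpNorm_nonneg hq, lpNorm_rpow hq.ne']
  exact hu.le_tsum x fun y _ => by positivity

lemma abs_rpow_le_mul_abs_rpow {a M m : ℝ} (hq : 0 ≤ q) (hqm : q ≤ m) (ha : |a| ≤ M) :
    |a| ^ m ≤ M ^ (m - q) * |a| ^ q := by
  have hsub : 0 ≤ m - q := sub_nonneg.mpr hqm
  calc |a| ^ m = |a| ^ (m - q) * |a| ^ q := by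
        rw [← Real.rpow_add_of_nonneg (abs_nonneg a) hsub hq, sub_add_cancel]
    _ ≤ M ^ (m - q) * |a| ^ q := by gcongr

lemma Memlp.mono {m : ℝ} (hu : Memlp q u) (hq : 0 < q) (hqm : q ≤ m) : Memlp m u :=
  Summable.of_nonneg_of_le (fun _ => by positivity)
    (fun x => abs_rpow_le_mul_abs_rpow hq.le hqm (hu.abs_le_lpNorm hq x)) (hu.mul_left _)

lemma Memlp.tsum_abs_rpow_le {m M : ℝ} (hu : Memlp q u) (hq : 0 < q) (hqm : q ≤ m)
    (hM : ∀ x, |u x| ≤ M) : ∑' x, |u x| ^ m ≤ M ^ (m - q) * ∑' x, |u x| ^ q := by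
  rw [← tsum_mul_left]
  exact (hu.mono hq hqm).tsum_le_tsum (fun x => abs_rpow_le_mul_abs_rpow hq.le hqm (hM x))
    (hu.mul_left _)

lemma lpNorm_le_of_tsum_le {K D : ℝ} (hq : 0 < q) (hK : 0 ≤ K) (hD : 0 ≤ D)
    (hu : 0 < lpNorm q u) (h : ∑' x, |u x| ^ q ≤ K * lpNorm q u ^ (q - 2) * D ^ 2) :
    lpNorm q u ≤ √K * D := by
  have hpow : lpNorm q u ^ (q - 2) * lpNorm q u ^ 2 = ∑' x, |u x| ^ q := by
    rw [← lpNorm_rpow hq.ne', ← Real.rpow_natCast, ← Real.rpow_add hu]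
    norm_num
  rw [← sq_le_sq₀ hu.le (by positivity), mul_pow, Real.sq_sqrt hK]
  exact le_of_mul_le_mul_left (by linarith) (Real.rpow_pos_of_pos hu (q - 2))

end LpNorm

section WordMetric

variable [Group G] {S : Finset G}

lemma submonoid_closure_eq_top (hgen : Subgroup.closure (S : Set G) = ⊤)
    (hsym : ∀ s ∈ S, s⁻¹ ∈ S) : Submonoid.closure (S : Set G) = ⊤ := by
  have hinv : (S : Set G)⁻¹ ⊆ S := fun s hs => by simpa using hsym s⁻¹ hs
  rw [← Set.union_eq_self_of_subset_right hinv, ← Subgroup.closure_toSubmonoid, hgen,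
    Subgroup.top_toSubmonoid]

lemma wordDist_eq_wordDist_one (x y : G) : wordDist S x y = wordDist S 1 (x⁻¹ * y) := by
  simp only [wordDist, one_mul, inv_mul_eq_iff_eq_mul]

lemma wordDist_self (x : G) : wordDist S x x = 0 :=
  Nat.le_zero.mp (Nat.sInf_le ⟨[], by simp, rfl, by simp⟩)

lemma exists_list_length_eq_wordDist (hS : Submonoid.closure (S : Set G) = ⊤) (g : G) :
    ∃ l : List G, (∀ s ∈ l, s ∈ S) ∧ l.length = wordDist S 1 g ∧ l.prod = g := by
  obtain ⟨l, hl, hprod⟩ := Submonoid.exists_list_of_mem_closure (hS.symm ▸ Submonoid.mem_top g)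
  have hne : {k : ℕ | ∃ l : List G, (∀ s ∈ l, s ∈ S) ∧ l.length = k ∧ g = 1 * l.prod}.Nonempty :=
    ⟨l.length, l, hl, rfl, by rw [one_mul, hprod]⟩
  obtain ⟨l, hl, hlen, hprod⟩ := Nat.sInf_mem hne
  exact ⟨l, hl, hlen, by rw [hprod, one_mul]⟩

lemma wordDist_pos (hS : Submonoid.closure (S : Set G) = ⊤) {x y : G} (hxy : x ≠ y) :
    0 < wordDist S x y := by
  obtain ⟨l, -, hlen, hprod⟩ := exists_list_length_eq_wordDist hS (x⁻¹ * y)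
  rw [wordDist_eq_wordDist_one, ← hlen, List.length_pos_iff]
  rintro rfl
  exact hxy (inv_mul_eq_one.mp (by simpa using hprod.symm))

lemma exists_path (hS : Submonoid.closure (S : Set G) = ⊤) (g : G) :
    ∃ γ : ℕ → G, γ 0 = 1 ∧ γ (wordDist S 1 g) = g ∧
      ∀ i < wordDist S 1 g, ∃ s ∈ S, γ (i + 1) = γ i * s := by
  obtain ⟨l, hl, hlen, hprod⟩ := exists_list_length_eq_wordDist hS g
  refine ⟨fun i => (l.take i).prod, by simp, by simp [← hlen, hprod], fun i hi => ?_⟩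
  rw [← hlen] at hi
  exact ⟨l[i], hl _ (List.getElem_mem hi), List.prod_take_succ l i hi⟩

/-- The ball of radius `n` about the identity in the word metric. -/
def ball (S : Finset G) (n : ℕ) : Set G := {g | wordDist S 1 g ≤ n}

lemma one_mem_ball (n : ℕ) : (1 : G) ∈ ball S n := (wordDist_self 1).trans_le n.zero_le

lemma finite_ball (hS : Submonoid.closure (S : Set G) = ⊤) (n : ℕ) : (ball S n).Finite := by
  refine ((List.finite_length_le S n).image fun l => (l.map Subtype.val).prod).subset fun g hg => ?_
  obtain ⟨l, hl, hlen, hprod⟩ := exists_list_length_eq_wordDist hS g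
  lift l to List S using hl
  have hle : wordDist S 1 g ≤ n := hg
  exact ⟨l, by simpa [← hlen] using hle, hprod⟩

end WordMetric

section Gradient

variable [Group G] {S : Finset G} {u : G → ℝ}

lemma gradSq_nonneg (x : G) : 0 ≤ gradSq S u x := Finset.sum_nonneg fun _ _ => sq_nonneg _

lemma sq_sub_le_gradSq {s : G} (hs : s ∈ S) (x : G) : (u (x * s) - u x) ^ 2 ≤ gradSq S u x :=
  Finset.single_le_sum (f := fun s => (u (x * s) - u x) ^ 2) (fun _ _ => sq_nonneg _) hs

lemma D12Norm_eq_sqrt : D12Norm S u = √(∑' x, gradSq S u x) := by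
  rw [D12Norm, Real.sqrt_eq_rpow]

lemma D12Norm_nonneg : 0 ≤ D12Norm S u := by
  rw [D12Norm_eq_sqrt]
  exact Real.sqrt_nonneg _

lemma D12Norm_sq : D12Norm S u ^ 2 = ∑' x, gradSq S u x := by
  rw [D12Norm_eq_sqrt, Real.sq_sqrt (tsum_nonneg gradSq_nonneg)]

lemma nonempty_of_D12Norm_ne_zero (hu : D12Norm S u ≠ 0) : S.Nonempty := by
  rw [Finset.nonempty_iff_ne_empty]
  rintro rfl
  simp [D12Norm, gradSq] at hu

lemma abs_sub_le_D12Norm (hu : Summable (gradSq S u)) {s : G} (hs : s ∈ S) (x : G) :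
    |u (x * s) - u x| ≤ D12Norm S u := by
  rw [← sq_le_sq₀ (abs_nonneg _) D12Norm_nonneg, sq_abs, D12Norm_sq]
  exact (sq_sub_le_gradSq hs x).trans (hu.le_tsum x fun y _ => gradSq_nonneg y)

lemma sum_abs_sub_le_card_mul_D12Norm (hu : Summable (gradSq S u)) (x : G) :
    ∑ s ∈ S, |u (x * s) - u x| ≤ S.card * D12Norm S u := by
  rw [← nsmul_eq_mul]
  exact Finset.sum_le_card_nsmul _ _ _ fun s hs => abs_sub_le_D12Norm hu hs x

lemma abs_sub_le_wordDist_mul (hS : Submonoid.closure (S : Set G) = ⊤) {ε : ℝ}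
    (hε : ∀ x, ∀ s ∈ S, |u (x * s) - u x| ≤ ε) (g x : G) :
    |u (x * g) - u x| ≤ wordDist S 1 g * ε := by
  obtain ⟨γ, h₀, h₁, hstep⟩ := exists_path hS g
  calc |u (x * g) - u x|
      = |∑ i ∈ Finset.range (wordDist S 1 g), (u (x * γ (i + 1)) - u (x * γ i))| := by
        rw [Finset.sum_range_sub fun i => u (x * γ i), h₀, h₁, mul_one]
    _ ≤ ∑ i ∈ Finset.range (wordDist S 1 g), |u (x * γ (i + 1)) - u (x * γ i)| :=
        Finset.abs_sum_le_sum_abs _ _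
    _ ≤ (Finset.range (wordDist S 1 g)).card • ε := by
        refine Finset.sum_le_card_nsmul _ _ _ fun i hi => ?_
        obtain ⟨s, hs, hγ⟩ := hstep i (Finset.mem_range.mp hi)
        rw [hγ, ← mul_assoc]
        exact hε _ s hs
    _ = wordDist S 1 g * ε := by rw [Finset.card_range, nsmul_eq_mul]

lemma sum_sq_sub_le_wordDist_sq_mul (hS : Submonoid.closure (S : Set G) = ⊤)
    (hu : Summable (gradSq S u)) (g : G) (F : Finset G) :
    ∑ x ∈ F, (u (x * g) - u x) ^ 2 ≤ (wordDist S 1 g : ℝ) ^ 2 * ∑' x, gradSq S u x := by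
  obtain ⟨γ, h₀, h₁, hstep⟩ := exists_path hS g
  set n := wordDist S 1 g
  have hedge : ∀ i ∈ Finset.range n,
      ∑ x ∈ F, (u (x * γ (i + 1)) - u (x * γ i)) ^ 2 ≤ ∑' x, gradSq S u x := by
    intro i hi
    obtain ⟨s, hs, hγ⟩ := hstep i (Finset.mem_range.mp hi)
    refine le_trans (Finset.sum_le_sum fun x _ => ?_)
      (sum_comp_le_tsum gradSq_nonneg hu (mulRightEmbedding (γ i)) F)
    rw [hγ, ← mul_assoc]
    exact sq_sub_le_gradSq hs (x * γ i)
  calc ∑ x ∈ F, (u (x * g) - u x) ^ 2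
      = ∑ x ∈ F, (∑ i ∈ Finset.range n, (u (x * γ (i + 1)) - u (x * γ i))) ^ 2 := by
        refine Finset.sum_congr rfl fun x _ => ?_
        rw [Finset.sum_range_sub fun i => u (x * γ i), h₀, h₁, mul_one]
    _ ≤ ∑ x ∈ F, n * ∑ i ∈ Finset.range n, (u (x * γ (i + 1)) - u (x * γ i)) ^ 2 :=
        Finset.sum_le_sum fun x _ => by
          simpa only [Finset.card_range] using sq_sum_le_card_mul_sum_sq (s := Finset.range n)
    _ = n * ∑ i ∈ Finset.range n, ∑ x ∈ F, (u (x * γ (i + 1)) - u (x * γ i)) ^ 2 := by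
        rw [← Finset.mul_sum, Finset.sum_comm]
    _ ≤ n * ((Finset.range n).card • ∑' x, gradSq S u x) := by
        gcongr
        exact Finset.sum_le_card_nsmul _ _ _ hedge
    _ = (n : ℝ) ^ 2 * ∑' x, gradSq S u x := by
        rw [Finset.card_range, nsmul_eq_mul, ← mul_assoc, sq]

end Gradient

section Averages

open scoped BigOperators

variable [Group G] {S A : Finset G} {u : G → ℝ} {n : ℕ}

/-- The average of `u` over the right translates `x * g`, `g ∈ A`. -/
def rightAvg (A : Finset G) (u : G → ℝ) (x : G) : ℝ := 𝔼 g ∈ A, u (x * g)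

lemma sub_rightAvg (hA : A.Nonempty) (x : G) :
    u x - rightAvg A u x = -𝔼 g ∈ A, (u (x * g) - u x) := by
  rw [Finset.expect_sub_distrib, Finset.expect_const hA, rightAvg, neg_sub]

lemma abs_sub_rightAvg_le (hS : Submonoid.closure (S : Set G) = ⊤) (hA : A.Nonempty)
    (hAn : (A : Set G) ⊆ ball S n) {ε : ℝ} (hε : ∀ x, ∀ s ∈ S, |u (x * s) - u x| ≤ ε)
    (hε₀ : 0 ≤ ε) (x : G) : |u x - rightAvg A u x| ≤ n * ε := by
  rw [sub_rightAvg hA, abs_neg]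
  refine (Finset.abs_expect_le _ _).trans (Finset.expect_le hA fun g hg => ?_)
  refine (abs_sub_le_wordDist_mul hS hε g x).trans ?_
  gcongr
  exact hAn hg

lemma sum_sq_sub_rightAvg_le (hS : Submonoid.closure (S : Set G) = ⊤)
    (hu : Summable (gradSq S u)) (hA : A.Nonempty) (hAn : (A : Set G) ⊆ ball S n)
    (F : Finset G) : ∑ x ∈ F, (u x - rightAvg A u x) ^ 2 ≤ (n : ℝ) ^ 2 * ∑' x, gradSq S u x := by
  have hJensen : ∀ x, (u x - rightAvg A u x) ^ 2 ≤ 𝔼 g ∈ A, (u (x * g) - u x) ^ 2 := fun x => by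
    rw [sub_rightAvg hA, neg_sq]
    simpa [hA] using Finset.expect_mul_sq_le_sq_mul_sq A (fun g => u (x * g) - u x) fun _ => 1
  calc ∑ x ∈ F, (u x - rightAvg A u x) ^ 2
      ≤ ∑ x ∈ F, 𝔼 g ∈ A, (u (x * g) - u x) ^ 2 := Finset.sum_le_sum fun x _ => hJensen x
    _ = 𝔼 g ∈ A, ∑ x ∈ F, (u (x * g) - u x) ^ 2 := (Finset.expect_sum_comm _ _ _).symm
    _ ≤ (n : ℝ) ^ 2 * ∑' x, gradSq S u x := Finset.expect_le hA fun g hg => by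
        refine (sum_sq_sub_le_wordDist_sq_mul hS hu g F).trans ?_
        have : 0 ≤ ∑' x, gradSq S u x := tsum_nonneg gradSq_nonneg
        gcongr
        exact hAn hg

lemma Memlp.abs_rightAvg_le {q : ℝ} (hu : Memlp q u) (hq : 1 ≤ q) (hA : A.Nonempty) (x : G) :
    |rightAvg A u x| ≤ (A.card : ℝ) ^ (-(1 / q)) * lpNorm q u := by
  have hq₀ : 0 < q := one_pos.trans_le hq
  have hcard : (0 : ℝ) < A.card := by exact_mod_cast hA.card_pos
  have hJensen : (𝔼 g ∈ A, |u (x * g)|) ^ q ≤ 𝔼 g ∈ A, |u (x * g)| ^ q := by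
    simp only [Finset.expect_eq_sum_div_card, div_eq_inv_mul, Finset.mul_sum]
    exact Real.rpow_arith_mean_le_arith_mean_rpow A (fun _ => (A.card : ℝ)⁻¹) _
      (fun _ _ => by positivity) (by simp [hcard.ne']) (fun _ _ => abs_nonneg _) hq
  rw [← Real.rpow_le_rpow_iff (abs_nonneg _) (mul_nonneg (by positivity) lpNorm_nonneg) hq₀]
  calc |rightAvg A u x| ^ q ≤ (𝔼 g ∈ A, |u (x * g)|) ^ q := by
        gcongr; exact Finset.abs_expect_le _ _
    _ ≤ (∑ g ∈ A, |u (x * g)| ^ q) / A.card := hJensen.trans_eq (Finset.expect_eq_sum_div_card _ _)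
    _ ≤ (∑' y, |u y| ^ q) / A.card := by
        gcongr
        exact sum_comp_le_tsum (fun _ => by positivity) hu (mulLeftEmbedding x) A
    _ = ((A.card : ℝ) ^ (-(1 / q)) * lpNorm q u) ^ q := by
        rw [Real.mul_rpow (by positivity) lpNorm_nonneg, lpNorm_rpow hq₀.ne',
          ← Real.rpow_mul hcard.le, neg_mul, one_div_mul_cancel hq₀.ne', Real.rpow_neg_one,
          div_eq_inv_mul]

end Averages

section Sobolev

variable [Group G] {S : Finset G} {N : ℕ} {C₁ q : ℝ}

lemma exists_subset_ball_abs_rightAvg_le (hS : Submonoid.closure (S : Set G) = ⊤) (hC₁ : 0 < C₁)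
    (hlow : ∀ n : ℕ, 1 ≤ n → C₁ * (n : ℝ) ^ N ≤ (Nat.card (ball S n) : ℝ)) (hq : 1 ≤ q)
    {n : ℕ} (hn : 1 ≤ n) :
    ∃ A : Finset G, A.Nonempty ∧ (A : Set G) ⊆ ball S n ∧ ∀ u : G → ℝ, Memlp q u → ∀ x,
      |rightAvg A u x| ≤ C₁ ^ (-(1 / q)) * (n : ℝ) ^ (-(N / q)) * lpNorm q u := by
  have hn₀ : (0 : ℝ) < n := by exact_mod_cast hn
  have hA : (finite_ball hS n).toFinset.Nonempty :=
    ⟨1, (finite_ball hS n).mem_toFinset.mpr (one_mem_ball n)⟩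
  refine ⟨(finite_ball hS n).toFinset, hA, by simp, fun u hu x => (hu.abs_rightAvg_le hq hA x).trans
    (mul_le_mul_of_nonneg_right ?_ lpNorm_nonneg)⟩
  rw [← Nat.card_eq_card_finite_toFinset]
  calc (Nat.card (ball S n) : ℝ) ^ (-(1 / q)) ≤ (C₁ * (n : ℝ) ^ N) ^ (-(1 / q)) :=
        Real.rpow_le_rpow_of_nonpos (by positivity) (hlow n hn)
          (neg_nonpos.mpr (by positivity))
    _ = C₁ ^ (-(1 / q)) * (n : ℝ) ^ (-(N / q)) := by
        rw [Real.mul_rpow hC₁.le (by positivity), ← Real.rpow_natCast, ← Real.rpow_mul hn₀.le]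
        ring_nf

lemma sobolev_exponent_ge_two (hN : 3 ≤ N) : 2 ≤ 2 * (N : ℝ) / (N - 2) := by
  have hN₃ : (3 : ℝ) ≤ N := by exact_mod_cast hN
  rw [le_div_iff₀ (by linarith)]
  linarith

lemma four_mul_two_rpow_lt_one (hN : 3 ≤ N) (hq : 2 * (N : ℝ) / (N - 2) < q) :
    4 * ((2 : ℝ) ^ (-(N / q))) ^ (q - 2) < 1 := by
  have hN₃ : (3 : ℝ) ≤ N := by exact_mod_cast hN
  have hq₀ : 0 < q := by linarith [sobolev_exponent_ge_two hN]
  rw [div_lt_iff₀ (by linarith)] at hq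
  have hneg : 2 + -((N : ℝ) / q) * (q - 2) < 0 := by
    rw [show 2 + -((N : ℝ) / q) * (q - 2) = (2 * N - q * (N - 2)) / q by field_simp; ring]
    exact div_neg_of_neg_of_pos (by linarith) hq₀
  rw [← Real.rpow_mul two_pos.le, show (4 : ℝ) = 2 ^ (2 : ℝ) by norm_num, ← Real.rpow_add two_pos]
  exact Real.rpow_lt_one_of_one_lt_of_neg one_lt_two hneg

lemma MemD12.memlp {u : G → ℝ} (hu : MemD12 S N u) (hN : 3 ≤ N)
    (hq : 2 * (N : ℝ) / (N - 2) ≤ q) : Memlp q u :=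
  hu.1.mono (two_pos.trans_le (sobolev_exponent_ge_two hN)) hq

lemma exists_dyadic_abs_rightAvg_le (hS : Submonoid.closure (S : Set G) = ⊤) (hC₁ : 0 < C₁)
    (hlow : ∀ n : ℕ, 1 ≤ n → C₁ * (n : ℝ) ^ N ≤ (Nat.card (ball S n) : ℝ)) (hq : 1 ≤ q) :
    ∃ A : ℕ → Finset G, (∀ j, (A j).Nonempty) ∧ (∀ j, (A j : Set G) ⊆ ball S (2 ^ j)) ∧
      ∀ u : G → ℝ, Memlp q u → ∀ j x, |rightAvg (A j) u x| ≤
        C₁ ^ (-(1 / q)) * ((2 : ℝ) ^ (-(N / q))) ^ j * lpNorm q u := by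
  choose A hA hAball hAavg using fun j : ℕ =>
    exists_subset_ball_abs_rightAvg_le hS hC₁ hlow hq (Nat.one_le_two_pow (n := j))
  refine ⟨A, hA, hAball, fun u hu j x => (hAavg j u hu x).trans_eq ?_⟩
  rw [Nat.cast_pow, Nat.cast_ofNat, Real.rpow_pow_comm two_pos.le]

lemma exists_lpNorm_le_D12Norm (hS : Submonoid.closure (S : Set G) = ⊤) (hN : 3 ≤ N)
    (hC₁ : 0 < C₁)
    (hlow : ∀ n : ℕ, 1 ≤ n → C₁ * (n : ℝ) ^ N ≤ (Nat.card (ball S n) : ℝ))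
    (hq : 2 * (N : ℝ) / (N - 2) < q) :
    ∃ C : ℝ, 0 ≤ C ∧ ∀ u : G → ℝ, MemD12 S N u → lpNorm q u ≤ C * D12Norm S u := by
  have hq₂ : 2 < q := (sobolev_exponent_ge_two hN).trans_lt hq
  have hgeom := four_mul_two_rpow_lt_one hN hq
  obtain ⟨A, hA, hAball, hAavg⟩ :=
    exists_dyadic_abs_rightAvg_le hS hC₁ hlow (one_le_two.trans hq₂.le)
  set ρ : ℝ := 2 ^ (-((N : ℝ) / q))
  have hρ₀ : 0 < ρ := by positivity
  have hρ₁ : ρ < 1 := Real.rpow_lt_one_of_one_lt_of_neg one_lt_two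
    (neg_neg_of_pos (div_pos (by positivity) (by linarith)))
  set B : ℝ := 1 + 2 * C₁ ^ (-(1 / q)) / ρ with hB
  set K : ℝ := 4 * B ^ (q - 2) / (1 - 4 * ρ ^ (q - 2)) with hK
  refine ⟨√K, K.sqrt_nonneg, fun u hu => ?_⟩
  have huq : Memlp q u := hu.memlp hN hq.le
  rcases (lpNorm_nonneg (q := q) (u := u)).eq_or_lt' with hy | hy
  · exact hy ▸ mul_nonneg K.sqrt_nonneg D12Norm_nonneg
  have hlarge : ∀ x, |u x| ≤ B * lpNorm q u := fun x =>
    (huq.abs_le_lpNorm (by linarith) x).trans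
      (le_mul_of_one_le_left hy.le (le_add_of_nonneg_right (by positivity)))
  have hsmall : ∀ j x, 2 * |rightAvg (A j) u x| ≤ B * lpNorm q u * ρ ^ (j + 1) := by
    intro j x
    calc 2 * |rightAvg (A j) u x| ≤ 2 * (C₁ ^ (-(1 / q)) * ρ ^ j * lpNorm q u) := by
          gcongr; exact hAavg u huq j x
      _ ≤ 2 * (C₁ ^ (-(1 / q)) * ρ ^ j * lpNorm q u) + lpNorm q u * ρ ^ (j + 1) :=
          le_add_of_nonneg_right (by positivity)
      _ = B * lpNorm q u * ρ ^ (j + 1) := by rw [hB]; field_simp; ring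
  have happrox : ∀ j (F : Finset G),
      ∑ x ∈ F, (u x - rightAvg (A j) u x) ^ 2 ≤ 4 ^ j * D12Norm S u ^ 2 := by
    intro j F
    have h := sum_sq_sub_rightAvg_le hS hu.2 (hA j) (hAball j) F
    rwa [← D12Norm_sq, Nat.cast_pow, Nat.cast_ofNat, pow_right_comm,
      show (2 : ℝ) ^ 2 = 4 by norm_num] at h
  refine lpNorm_le_of_tsum_le (by linarith)
    (div_nonneg (by positivity) (sub_nonneg.mpr hgeom.le)) D12Norm_nonneg hy ?_
  refine (tsum_abs_rpow_le_of_approx hq₂.le (by positivity) hρ₀ hρ₁ (by norm_num) hgeom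
    hlarge hsmall happrox).trans_eq ?_
  rw [Real.mul_rpow (by positivity) hy.le, hK]
  ring

lemma exists_abs_le_D12Norm (hS : Submonoid.closure (S : Set G) = ⊤) (hN : 3 ≤ N)
    (hC₁ : 0 < C₁)
    (hlow : ∀ n : ℕ, 1 ≤ n → C₁ * (n : ℝ) ^ N ≤ (Nat.card (ball S n) : ℝ)) :
    ∃ C : ℝ, ∀ u : G → ℝ, MemD12 S N u → ∀ x, |u x| ≤ C * D12Norm S u := by
  obtain ⟨q, hq⟩ := exists_gt (2 * (N : ℝ) / (N - 2))
  obtain ⟨C, -, hsob⟩ := exists_lpNorm_le_D12Norm hS hN hC₁ hlow hq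
  exact ⟨C, fun u hu x => ((hu.memlp hN hq.le).abs_le_lpNorm
    (by linarith [sobolev_exponent_ge_two hN]) x).trans (hsob u hu)⟩

lemma exists_forall_abs_le_of_abs_sub_le (hS : Submonoid.closure (S : Set G) = ⊤) (hN : 3 ≤ N)
    (hC₁ : 0 < C₁)
    (hlow : ∀ n : ℕ, 1 ≤ n → C₁ * (n : ℝ) ^ N ≤ (Nat.card (ball S n) : ℝ)) {η : ℝ} (hη : 0 < η) :
    ∃ ε : ℝ, 0 < ε ∧ ∀ u : G → ℝ, MemD12 S N u → D12Norm S u ≤ 1 →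
      (∀ x, ∀ s ∈ S, |u (x * s) - u x| ≤ ε) → ∀ x, |u x| ≤ η := by
  obtain ⟨q, hq⟩ := exists_gt (2 * (N : ℝ) / (N - 2))
  have hq₂ : 2 < q := (sobolev_exponent_ge_two hN).trans_lt hq
  have hNq : 0 < (N : ℝ) / q := div_pos (by positivity) (by linarith)
  obtain ⟨C, hC, hsob⟩ := exists_lpNorm_le_D12Norm hS hN hC₁ hlow hq
  have hdecay : Tendsto (fun n : ℕ => C₁ ^ (-(1 / q)) * (n : ℝ) ^ (-(N / q)) * C) atTop (𝓝 0) := by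
    simpa using (((tendsto_rpow_neg_atTop hNq).comp tendsto_natCast_atTop_atTop).const_mul
      (C₁ ^ (-(1 / q)))).mul_const C
  obtain ⟨n, hn, hn₁⟩ :=
    ((hdecay.eventually_le_const (half_pos hη)).and (eventually_ge_atTop 1)).exists
  have : (0 : ℝ) < n := by exact_mod_cast hn₁
  obtain ⟨A, hA, hAball, hAavg⟩ :=
    exists_subset_ball_abs_rightAvg_le hS hC₁ hlow (one_le_two.trans hq₂.le) hn₁
  refine ⟨η / 2 / n, by positivity, fun u hu hu₁ hgrad x => ?_⟩
  have hlp : lpNorm q u ≤ C := (hsob u hu).trans (mul_le_of_le_one_right hC hu₁)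
  have havg : |rightAvg A u x| ≤ η / 2 := by
    refine (hAavg u (hu.memlp hN hq.le) x).trans (le_trans ?_ hn)
    gcongr
  have hdiff : |u x - rightAvg A u x| ≤ η / 2 := by
    refine (abs_sub_rightAvg_le hS hA hAball hgrad (by positivity) x).trans_eq ?_
    field_simp
  linarith [abs_sub_abs_le_abs_sub (u x) (rightAvg A u x)]

end Sobolev

section Kernel

variable [Group G] {S : Finset G} {N : ℕ} {R : G → G → ℝ} {c α t : ℝ}

lemma kernel_le_max_one_wordDist
    (hup : ∀ x y, x ≠ y → R x y ≤ c * (wordDist S x y : ℝ) ^ α) (hdiag : ∀ x, R x x ≤ c)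
    (hS : Submonoid.closure (S : Set G) = ⊤) (x y : G) :
    R x y ≤ c * (max 1 (wordDist S x y) : ℝ) ^ α := by
  rcases eq_or_ne x y with rfl | hxy
  · simpa [wordDist_self] using hdiag x
  · rw [max_eq_right (by exact_mod_cast wordDist_pos hS hxy)]
    exact hup x y hxy

lemma exists_summable_majorant {C₂ : ℝ} (hS : Submonoid.closure (S : Set G) = ⊤)
    (hup : ∀ n : ℕ, 1 ≤ n → (Nat.card (ball S n) : ℝ) ≤ C₂ * (n : ℝ) ^ N)
    (hc : 0 ≤ c) (hR : ∀ x y, R x y ≤ c * (max 1 (wordDist S x y) : ℝ) ^ (α - N))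
    (ht : t < 1) (hαt : N + α < t * (2 * N)) :
    ∃ k : G → ℝ, (∀ z, 0 ≤ k z) ∧ Summable k ∧
      ∀ x y, R x y ≤ k (x⁻¹ * y) ^ (2 * (1 - t)) := by
  have ht₂ : 0 < 2 * (1 - t) := by linarith
  let σ : ℝ := 1 / (2 * (1 - t))
  have hσ : (N : ℝ) < (N - α) * σ := by
    rw [mul_one_div, lt_div_iff₀ ht₂]
    linarith
  refine ⟨fun z => (c * (max 1 (wordDist S 1 z) : ℝ) ^ (α - N)) ^ σ, fun z => by positivity, ?_,
    fun x y => (hR x y).trans_eq ?_⟩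
  · refine ((summable_max_one_rpow_neg_of_card_le (finite_ball hS) hup hσ).mul_left
      (c ^ σ)).congr fun z => ?_
    rw [Real.mul_rpow hc (by positivity), ← Real.rpow_mul (by positivity), ← neg_mul, neg_sub]
  · rw [← Real.rpow_mul (by positivity), one_div_mul_cancel ht₂.ne', Real.rpow_one,
      ← wordDist_eq_wordDist_one]

lemma rpow_mul_rpow_mul_rpow_le {a b k : ℝ} (ha : 0 ≤ a) (hb : 0 ≤ b) (hk : 0 ≤ k)
    (ht₀ : 1 / 2 ≤ t) (ht₁ : t ≤ 1) :
    k ^ (2 * (1 - t)) * b ^ t * a ^ t ≤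
      (2 * t - 1) * (a * b) + (1 - t) * (a * k) + (1 - t) * (b * k) := by
  have h₁ : 0 ≤ 2 * t - 1 := by linarith
  have h₂ : 0 ≤ 1 - t := by linarith
  have hsplit : ∀ {x : ℝ}, 0 ≤ x → x ^ t = x ^ (2 * t - 1) * x ^ (1 - t) := fun hx => by
    rw [← Real.rpow_add_of_nonneg hx h₁ h₂]
    ring_nf
  calc k ^ (2 * (1 - t)) * b ^ t * a ^ t
      = (a * b) ^ (2 * t - 1) * (a * k) ^ (1 - t) * (b * k) ^ (1 - t) := by
        rw [hsplit ha, hsplit hb, two_mul, Real.rpow_add_of_nonneg hk h₂ h₂,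
          Real.mul_rpow ha hb, Real.mul_rpow ha hk, Real.mul_rpow hb hk]
        ring
    _ ≤ (2 * t - 1) * (a * b) + (1 - t) * (a * k) + (1 - t) * (b * k) :=
        Real.geom_mean_le_arith_mean3_weighted h₁ h₂ h₂ (by positivity) (by positivity)
          (by positivity) (by ring)

lemma summable_and_tsum_kernel_mul_rpow_le (hR₀ : ∀ x y, 0 ≤ R x y) {H k : G → ℝ}
    (hH₀ : ∀ x, 0 ≤ H x) (hk₀ : ∀ z, 0 ≤ k z) (hH : Summable H) (hk : Summable k)
    (hRk : ∀ x y, R x y ≤ k (x⁻¹ * y) ^ (2 * (1 - t))) (ht₀ : 1 / 2 ≤ t) (ht₁ : t ≤ 1) :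
    Summable (fun z : G × G => R z.1 z.2 * H z.2 ^ t * H z.1 ^ t) ∧
      ∑' z : G × G, R z.1 z.2 * H z.2 ^ t * H z.1 ^ t ≤
        (2 * t - 1) * (∑' x, H x) ^ 2 + 2 * (1 - t) * ((∑' x, H x) * ∑' z, k z) := by
  have hHH := hasSum_mul_of_nonneg hH₀ hH₀ hH hH
  have hHk := hasSum_mul_of_nonneg hH₀ hk₀ hH hk
  have hfst : HasSum (fun z : G × G => H z.1 * k (z.1⁻¹ * z.2)) ((∑' x, H x) * ∑' z, k z) :=
    ((Equiv.refl G).prodShear fun x => Equiv.mulLeft x⁻¹).hasSum_iff.mpr hHk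
  have hsnd : HasSum (fun z : G × G => H z.2 * k (z.1⁻¹ * z.2)) ((∑' x, H x) * ∑' z, k z) :=
    ((Equiv.prodComm G G).trans ((Equiv.refl G).prodShear fun y =>
      (Equiv.inv G).trans (Equiv.mulRight y))).hasSum_iff.mpr hHk
  have hsum := ((hHH.mul_left (2 * t - 1)).add (hfst.mul_left (1 - t))).add (hsnd.mul_left (1 - t))
  have hle : ∀ z : G × G, R z.1 z.2 * H z.2 ^ t * H z.1 ^ t ≤ (2 * t - 1) * (H z.1 * H z.2) +
      (1 - t) * (H z.1 * k (z.1⁻¹ * z.2)) + (1 - t) * (H z.2 * k (z.1⁻¹ * z.2)) := fun z => by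
    refine le_trans ?_ (rpow_mul_rpow_mul_rpow_le (hH₀ z.1) (hH₀ z.2) (hk₀ _) ht₀ ht₁)
    have := hH₀ z.1
    have := hH₀ z.2
    gcongr
    exact hRk z.1 z.2
  have hsummable := Summable.of_nonneg_of_le (fun z => mul_nonneg (mul_nonneg (hR₀ _ _)
    (Real.rpow_nonneg (hH₀ _) _)) (Real.rpow_nonneg (hH₀ _) _)) hle hsum.summable
  refine ⟨hsummable, (hasSum_le hle hsummable.hasSum hsum).trans_eq ?_⟩
  ring

end Kernel

section Energy

variable {R : G → G → ℝ} {p : ℝ} {u : G → ℝ}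

/-- The summand `R(x,y) |u(y)|^p |u(x)|^p` of the energy, as a function of the pair `(x, y)`. -/
def energyDensity (R : G → G → ℝ) (p : ℝ) (u : G → ℝ) (z : G × G) : ℝ :=
  R z.1 z.2 * |u z.2| ^ p * |u z.1| ^ p

lemma energy_eq_tsum (h : Summable (energyDensity R p u)) :
    energy R p u = ∑' z, energyDensity R p u z := by
  rw [h.tsum_prod]
  simp only [energy, conv, energyDensity, tsum_mul_right]

lemma energy_pos (hR₀ : ∀ x y, 0 ≤ R x y) (h : Summable (energyDensity R p u)) {x y : G}
    (hR : 0 < R x y) (hx : u x ≠ 0) (hy : u y ≠ 0) : 0 < energy R p u := by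
  rw [energy_eq_tsum h]
  refine h.tsum_pos (fun z => ?_) (x, y) ?_ <;> unfold energyDensity
  · have := hR₀ z.1 z.2
    positivity
  · positivity

lemma exists_exponents {N : ℕ} {α : ℝ} (hN : 3 ≤ N) (hα : 0 < α) (hαN : α < N)
    (hp : (N + α) / (N - 2) < p) :
    ∃ t q : ℝ, 1 / 2 < t ∧ t < 1 ∧ N + α < t * (2 * N) ∧ 2 * (N : ℝ) / (N - 2) < q ∧ q < p / t := by
  have hN₃ : (3 : ℝ) ≤ N := by exact_mod_cast hN
  have hN₂ : (0 : ℝ) < N - 2 := by linarith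
  have hlow : (N + α) / (2 * N) < min 1 (p * (N - 2) / (2 * N)) := by
    refine lt_min ((div_lt_one (by positivity)).mpr (by linarith)) ?_
    gcongr
    rwa [← div_lt_iff₀ hN₂]
  obtain ⟨t, htα, htp⟩ := exists_between hlow
  obtain ⟨ht₁, htp⟩ := lt_min_iff.mp htp
  rw [div_lt_iff₀ (by positivity)] at htα
  rw [lt_div_iff₀ (by positivity)] at htp
  have ht₂ : 1 / 2 < t := lt_of_mul_lt_mul_right (by linarith) (by positivity : 0 ≤ 2 * (N : ℝ))
  obtain ⟨q, hq, hqp⟩ : ∃ q, 2 * (N : ℝ) / (N - 2) < q ∧ q < p / t := by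
    refine exists_between ?_
    rw [div_lt_div_iff₀ hN₂ (by linarith)]
    linarith
  exact ⟨t, q, ht₂, ht₁, htα, hq, hqp⟩

variable [Group G] {S : Finset G} {N : ℕ} {C₁ C₂ c α : ℝ}

lemma exists_energy_le_mul_tsum_rpow {t : ℝ} (hS : Submonoid.closure (S : Set G) = ⊤)
    (hup : ∀ n : ℕ, 1 ≤ n → (Nat.card (ball S n) : ℝ) ≤ C₂ * (n : ℝ) ^ N)
    (hR₀ : ∀ x y, 0 ≤ R x y) (hR : ∀ x y, R x y ≤ c * (max 1 (wordDist S x y) : ℝ) ^ (α - N))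
    (ht₀ : 1 / 2 ≤ t) (ht₁ : t < 1) (hαt : N + α < t * (2 * N)) :
    ∃ κ : ℝ, 0 ≤ κ ∧ ∀ u : G → ℝ, Memlp (p / t) u → Summable (energyDensity R p u) ∧
      energy R p u ≤ (∑' x, |u x| ^ (p / t)) * (∑' x, |u x| ^ (p / t) + κ) := by
  have hc : 0 ≤ c := (hR₀ 1 1).trans (by simpa [wordDist_self] using hR 1 1)
  obtain ⟨k, hk₀, hk, hRk⟩ := exists_summable_majorant hS hup hc hR ht₁ hαt
  have hκ₀ : 0 ≤ ∑' z, k z := tsum_nonneg hk₀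
  refine ⟨∑' z, k z, hκ₀, fun u hu => ?_⟩
  have hA₀ : 0 ≤ ∑' x, |u x| ^ (p / t) := by positivity
  obtain ⟨hs, hle⟩ := summable_and_tsum_kernel_mul_rpow_le hR₀ (fun x => by positivity) hk₀ hu hk
    hRk ht₀ ht₁.le
  simp only [← Real.rpow_mul (abs_nonneg _), div_mul_cancel₀ p (by linarith : t ≠ 0)] at hs hle
  refine ⟨hs, (energy_eq_tsum hs).trans_le (hle.trans ?_)⟩
  rw [mul_add, ← sq]
  gcongr ?_ + ?_
  · exact mul_le_of_le_one_left (sq_nonneg _) (by linarith)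
  · exact mul_le_of_le_one_left (mul_nonneg hA₀ hκ₀) (by linarith)

lemma exists_energy_le_mul_rpow (hS : Submonoid.closure (S : Set G) = ⊤) (hN : 3 ≤ N)
    (hC₁ : 0 < C₁)
    (hlow : ∀ n : ℕ, 1 ≤ n → C₁ * (n : ℝ) ^ N ≤ (Nat.card (ball S n) : ℝ))
    (hup : ∀ n : ℕ, 1 ≤ n → (Nat.card (ball S n) : ℝ) ≤ C₂ * (n : ℝ) ^ N)
    (hα : 0 < α) (hαN : α < N) (hR₀ : ∀ x y, 0 ≤ R x y)
    (hR : ∀ x y, R x y ≤ c * (max 1 (wordDist S x y) : ℝ) ^ (α - N))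
    (hp : (N + α) / (N - 2) < p) :
    ∃ C γ : ℝ, 0 < γ ∧ ∀ u : G → ℝ, MemD12 S N u → D12Norm S u ≤ 1 →
      Summable (energyDensity R p u) ∧ ∀ M, (∀ x, |u x| ≤ M) → energy R p u ≤ C * M ^ γ := by
  obtain ⟨t, q, ht₀, ht₁, hαt, hq, hqp⟩ := exists_exponents hN hα hαN hp
  have hq₀ : 0 < q := by linarith [sobolev_exponent_ge_two hN]
  obtain ⟨κ, hκ, hyoung⟩ := exists_energy_le_mul_tsum_rpow (p := p) hS hup hR₀ hR ht₀.le ht₁ hαt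
  obtain ⟨C, hC, hsob⟩ := exists_lpNorm_le_D12Norm hS hN hC₁ hlow hq
  refine ⟨C ^ q * (C ^ (p / t - q) * C ^ q + κ), p / t - q, sub_pos.mpr hqp, fun u hu hu₁ => ?_⟩
  have huq : Memlp q u := hu.memlp hN hq.le
  have hlp : lpNorm q u ≤ C := (hsob u hu).trans (mul_le_of_le_one_right hC hu₁)
  have htsum : ∀ {M : ℝ}, (∀ x, |u x| ≤ M) → ∑' x, |u x| ^ (p / t) ≤ M ^ (p / t - q) * C ^ q := by
    intro M hM
    have hM₀ : 0 ≤ M := (abs_nonneg _).trans (hM 1)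
    refine (huq.tsum_abs_rpow_le hq₀ hqp.le hM).trans ?_
    rw [← lpNorm_rpow hq₀.ne']
    have := lpNorm_nonneg (q := q) (u := u)
    gcongr
  obtain ⟨hs, hle⟩ := hyoung u (huq.mono hq₀ hqp.le)
  refine ⟨hs, fun M hM => hle.trans ?_⟩
  have hM₀ : 0 ≤ M := (abs_nonneg _).trans (hM 1)
  calc (∑' x, |u x| ^ (p / t)) * (∑' x, |u x| ^ (p / t) + κ)
      ≤ (M ^ (p / t - q) * C ^ q) * (C ^ (p / t - q) * C ^ q + κ) := by
        gcongr
        · exact htsum hM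
        · exact htsum fun x => (huq.abs_le_lpNorm hq₀ x).trans hlp
    _ = C ^ q * (C ^ (p / t - q) * C ^ q + κ) * M ^ (p / t - q) := by ring

lemma exists_le_abs_sub_of_le_energy (hS : Submonoid.closure (S : Set G) = ⊤) (hN : 3 ≤ N)
    (hC₁ : 0 < C₁)
    (hlow : ∀ n : ℕ, 1 ≤ n → C₁ * (n : ℝ) ^ N ≤ (Nat.card (ball S n) : ℝ))
    (hup : ∀ n : ℕ, 1 ≤ n → (Nat.card (ball S n) : ℝ) ≤ C₂ * (n : ℝ) ^ N)
    (hα : 0 < α) (hαN : α < N) (hR₀ : ∀ x y, 0 ≤ R x y)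
    (hR : ∀ x y, R x y ≤ c * (max 1 (wordDist S x y) : ℝ) ^ (α - N))
    (hp : (N + α) / (N - 2) < p) {δ : ℝ} (hδ : 0 < δ) :
    ∃ ε : ℝ, 0 < ε ∧ ∀ u : G → ℝ, MemD12 S N u → D12Norm S u ≤ 1 → δ ≤ energy R p u →
      ∃ x, ∃ s ∈ S, ε ≤ |u (x * s) - u x| := by
  obtain ⟨C, γ, hγ, henergy⟩ := exists_energy_le_mul_rpow hS hN hC₁ hlow hup hα hαN hR₀ hR hp
  have hlim : Tendsto (fun η : ℝ => C * η ^ γ) (𝓝[>] 0) (𝓝 0) := by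
    have h := ((Real.continuous_rpow_const hγ.le).const_mul C).tendsto 0
    rw [Real.zero_rpow hγ.ne', mul_zero] at h
    exact h.mono_left nhdsWithin_le_nhds
  obtain ⟨η, hηδ, hη⟩ := ((hlim.eventually_lt_const hδ).and self_mem_nhdsWithin).exists
  obtain ⟨ε, hε, hsmall⟩ := exists_forall_abs_le_of_abs_sub_le hS hN hC₁ hlow hη
  refine ⟨ε, hε, fun u hu hu₁ hδu => ?_⟩
  by_contra! hgrad
  have hsup := hsmall u hu hu₁ fun x s hs => (hgrad x s hs).le
  exact absurd (((henergy u hu hu₁).2 η hsup).trans_lt hηδ) hδu.not_gt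

end Energy

section BestConstant

variable [Group G] {S : Finset G} {N : ℕ} {R : G → G → ℝ} {C₁ C₂ c α p : ℝ} {u : G → ℝ}

lemma memD12_of_finite_support (hN : 3 ≤ N) (hu : u.support.Finite) : MemD12 S N u := by
  refine ⟨summable_of_hasFiniteSupport (hu.subset fun x hx h => hx ?_), summable_sum fun s _ =>
    summable_of_hasFiniteSupport (((hu.preimage (mul_left_injective s).injOn).union hu).subset
      fun x hx => ?_)⟩
  · simp only [h, abs_zero]
    exact Real.zero_rpow (by linarith [sobolev_exponent_ge_two hN])
  · contrapose! hx
    simp_all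

lemma D12Norm_const_mul (a : ℝ) : D12Norm S (fun x => a * u x) = |a| * D12Norm S u := by
  have h : gradSq S (fun x => a * u x) = fun x => a ^ 2 * gradSq S u x := by
    ext x
    simp only [gradSq, ← mul_sub, mul_pow, Finset.mul_sum]
  rw [D12Norm_eq_sqrt, D12Norm_eq_sqrt, h, tsum_mul_left, Real.sqrt_mul (sq_nonneg a),
    Real.sqrt_sq_eq_abs]

lemma exists_memD12_D12Norm_eq_one (hN : 3 ≤ N) {s : G} (hs : s ∈ S) (hs₁ : s ≠ 1) :
    ∃ u : G → ℝ, MemD12 S N u ∧ D12Norm S u = 1 ∧ u 1 ≠ 0 ∧ u s ≠ 0 := by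
  classical
  let f : G → ℝ := fun x => if x = 1 then 2 else if x = s then 1 else 0
  have hf₁ : f 1 = 2 := if_pos rfl
  have hfs : f s = 1 := by simp [f, hs₁]
  have hsupp : f.support ⊆ {1, s} := fun x hx => by
    by_contra h
    simp_all [f]
  have hfin : f.support.Finite := (Set.toFinite _).subset hsupp
  have hnorm : 0 < D12Norm S f := by
    refine lt_of_lt_of_le ?_ (abs_sub_le_D12Norm (memD12_of_finite_support hN hfin).2 hs 1)
    rw [one_mul, hf₁, hfs]
    norm_num
  refine ⟨fun x => (D12Norm S f)⁻¹ * f x, memD12_of_finite_support hN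
    (hfin.subset (Function.support_mul_subset_right _ _)), ?_, ?_, ?_⟩
  · rw [D12Norm_const_mul, abs_of_pos (by positivity), inv_mul_cancel₀ hnorm.ne']
  · simp [hf₁, hnorm.ne']
  · simp [hfs, hnorm.ne']

lemma bestK_pos (hS : Submonoid.closure (S : Set G) = ⊤) (hN : 3 ≤ N) (hC₁ : 0 < C₁)
    (hlow : ∀ n : ℕ, 1 ≤ n → C₁ * (n : ℝ) ^ N ≤ (Nat.card (ball S n) : ℝ))
    (hup : ∀ n : ℕ, 1 ≤ n → (Nat.card (ball S n) : ℝ) ≤ C₂ * (n : ℝ) ^ N)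
    (hα : 0 < α) (hαN : α < N) (hR₀ : ∀ x y, 0 ≤ R x y)
    (hR : ∀ x y, R x y ≤ c * (max 1 (wordDist S x y) : ℝ) ^ (α - N))
    (hp : (N + α) / (N - 2) < p) {s : G} (hs : s ∈ S) (hs₁ : s ≠ 1) (hRs : 0 < R 1 s) :
    0 < bestK S N R p := by
  obtain ⟨C, γ, -, henergy⟩ := exists_energy_le_mul_rpow hS hN hC₁ hlow hup hα hαN hR₀ hR hp
  obtain ⟨M, hM⟩ := exists_abs_le_D12Norm hS hN hC₁ hlow
  obtain ⟨u, hu, hu₁, hu_one, hu_s⟩ := exists_memD12_D12Norm_eq_one hN hs hs₁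
  refine (energy_pos hR₀ (henergy u hu hu₁.le).1 hRs hu_one hu_s).trans_le
    (le_csSup ⟨C * M ^ γ, ?_⟩ ⟨u, hu, hu₁, rfl⟩)
  rintro _ ⟨v, hv, hv₁, rfl⟩
  exact (henergy v hv hv₁.le).2 M fun x => by simpa only [hv₁, mul_one] using hM v hv x

end BestConstant

section GradientLowerBound

variable [Group G] {S : Finset G} {N : ℕ} {R : G → G → ℝ} {C₁ C₂ c α p δ : ℝ} {u : ℕ → G → ℝ}

theorem maximizing_sequence_gradient_lower_bound_general
    (hS : Submonoid.closure (S : Set G) = ⊤) (hN : 3 ≤ N) (hC₁ : 0 < C₁)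
    (hlow : ∀ n : ℕ, 1 ≤ n → C₁ * (n : ℝ) ^ N ≤ (Nat.card (ball S n) : ℝ))
    (hup : ∀ n : ℕ, 1 ≤ n → (Nat.card (ball S n) : ℝ) ≤ C₂ * (n : ℝ) ^ N)
    (hα : 0 < α) (hαN : α < N) (hR₀ : ∀ x y, 0 ≤ R x y)
    (hR : ∀ x y, R x y ≤ c * (max 1 (wordDist S x y) : ℝ) ^ (α - N))
    (hp : (N + α) / (N - 2) < p) (hmem : ∀ n, MemD12 S N (u n))
    (hnorm : ∀ n, D12Norm S (u n) ≤ 1) (hδ : 0 < δ)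
    (henergy : ∀ᶠ n in atTop, δ ≤ energy R p (u n)) :
    0 < liminf (fun n => ⨆ x : G, ∑ s ∈ S, |u n (x * s) - u n x|) atTop := by
  have hgrad_le : ∀ n x, ∑ s ∈ S, |u n (x * s) - u n x| ≤ S.card := fun n x =>
    (sum_abs_sub_le_card_mul_D12Norm (hmem n).2 x).trans
      (mul_le_of_le_one_right (Nat.cast_nonneg _) (hnorm n))
  obtain ⟨ε, hε, hgrad⟩ := exists_le_abs_sub_of_le_energy hS hN hC₁ hlow hup hα hαN hR₀ hR hp hδ
  refine hε.trans_le (le_liminf_of_le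
    (isBoundedUnder_of ⟨(S.card : ℝ), fun n => ciSup_le (hgrad_le n)⟩).isCoboundedUnder_ge ?_)
  filter_upwards [henergy] with n hn
  obtain ⟨x, s, hs, hxs⟩ := hgrad (u n) (hmem n) (hnorm n) hn
  calc ε ≤ |u n (x * s) - u n x| := hxs
    _ ≤ ∑ s ∈ S, |u n (x * s) - u n x| :=
        Finset.single_le_sum (f := fun s => |u n (x * s) - u n x|) (fun _ _ => abs_nonneg _) hs
    _ ≤ ⨆ x, ∑ s ∈ S, |u n (x * s) - u n x| :=
        le_ciSup ⟨(S.card : ℝ), by rintro _ ⟨x, rfl⟩; exact hgrad_le n x⟩ x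

end GradientLowerBound

theorem maximizing_sequence_gradient_lower_bound
    [Group G] [Countable G]
    (S : Finset G) (hS_gen : Subgroup.closure (S : Set G) = ⊤)
    (hS_sym : ∀ s ∈ S, s⁻¹ ∈ S) (hS_e : (1 : G) ∉ S)
    (N : ℕ) (hN : 3 ≤ N)
    (C₁ C₂ : ℝ) (hC₁ : 0 < C₁) (hC₂ : 0 < C₂)
    (hgrowth : ∀ n : ℕ, 1 ≤ n →
      C₁ * (n : ℝ) ^ N ≤ (Nat.card {x : G // wordDist S 1 x ≤ n} : ℝ) ∧
      (Nat.card {x : G // wordDist S 1 x ≤ n} : ℝ) ≤ C₂ * (n : ℝ) ^ N)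
    (α : ℝ) (hα : 0 < α) (hαN : α < N)
    (Rα : G → G → ℝ) (hR_nonneg : ∀ x y, 0 ≤ Rα x y)
    (hR_symm : ∀ x y, Rα x y = Rα y x)
    (c₁ c₂ : ℝ) (hc₁ : 0 < c₁) (hc₂ : 0 < c₂)
    (hR_low : ∀ x y : G, x ≠ y → c₁ * (wordDist S x y : ℝ) ^ (α - (N : ℝ)) ≤ Rα x y)
    (hR_up : ∀ x y : G, x ≠ y → Rα x y ≤ c₂ * (wordDist S x y : ℝ) ^ (α - (N : ℝ)))
    (hR_diag : ∀ x : G, Rα x x ≤ c₂)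
    (p : ℝ) (hp : ((N : ℝ) + α) / ((N : ℝ) - 2) < p)
    (u : ℕ → G → ℝ) (hmem : ∀ n, MemD12 S N (u n))
    (hnorm : ∀ n, D12Norm S (u n) = 1)
    (hmax : Tendsto (fun n => energy Rα p (u n)) atTop (𝓝 (bestK S N Rα p))) :
    0 < Filter.liminf
      (fun n => ⨆ x : G, ∑ s ∈ S, |u n (x * s) - u n x|) atTop := by
  have hS := submonoid_closure_eq_top hS_gen hS_sym
  have hlow := fun n hn => (hgrowth n hn).1
  have hup := fun n hn => (hgrowth n hn).2
  have hR := kernel_le_max_one_wordDist hR_up hR_diag hS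
  obtain ⟨s, hs⟩ : S.Nonempty := nonempty_of_D12Norm_ne_zero (hnorm 0 ▸ one_ne_zero)
  have hs₁ : s ≠ 1 := ne_of_mem_of_not_mem hs hS_e
  have hd : (0 : ℝ) < wordDist S 1 s := by exact_mod_cast wordDist_pos hS hs₁.symm
  have hRs : 0 < Rα 1 s := (by positivity : 0 < c₁ * _).trans_le (hR_low 1 s hs₁.symm)
  have hK : 0 < bestK S N Rα p :=
    bestK_pos hS hN hC₁ hlow hup hα hαN hR_nonneg hR hp hs hs₁ hRs
  exact maximizing_sequence_gradient_lower_bound_general hS hN hC₁ hlow hup hα hαN hR_nonneg hR hp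
    hmem (fun n => (hnorm n).le) (half_pos hK) (hmax.eventually_const_le (half_lt_self hK))

end Choquard
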